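/- (Proposition 1, part 1.) Let n ≥ 1, σ > 0, μ ∈ ℝ, ρ = μ/σ, p = Φ(ρ), q = Φ(−ρ) = 1 − p, f = φ(ρ), and let α ∈ [0, 1). Let X₁, …, Xₙ be i.i.d. random variables each with the normal distribution N(μ, σ²) (i.e., the underlying measure is the n-fold product of Gaussian measures on ℝⁿ). A proposal is accepted when the number of indices i with Xᵢ > 0 exceeds αn, i.e., is at least ⌊αn⌋ + 1. Then for every agent j, the expected one-step capital increment E[X_j · 1{#{i : Xᵢ > 0} ≥ ⌊αn⌋ + 1}] equals σ · Σ_{x=⌊αn⌋+1}^{n} ( ρ + (f/q)·( x/(p·n) − 1 ) ) · C(n, x) · pˣ · q^{n−x}. -/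

import Mathlib

/-!
Split the acceptance event according to the exact set `T` of supporters. On each piece the law is
a product of Gaussians over a box of half-lines, so Fubini (`setIntegral_pi_eval`) gives
`E[X_j ; supporters = T] = E[X_j | X_j > 0] p^|T| q^(n-|T|)` for `j ∈ T`, and the same with
`E[X_j | X_j ≤ 0]` for `j ∉ T` (`setIntegral_supporters_eq`). The truncated means are
`μ + σ f / p` and `μ - σ f / q`; they come from standardizing and from
the fact that `φ` has derivative `-t φ t` at `t`.

Among the sets `T` with `x` elements the fraction `x / n` contain `j`
(`card_powersetCard_filter_mem`), so they contribute `C(n, x) p^x q^(n-x)` times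
`(x / n) (μ + σ f / p) + (1 - x / n) (μ - σ f / q)`. Since `p + q = 1`, this factor is
`σ (ρ + (f / q) (x / (p n) - 1))`.
-/

open MeasureTheory ProbabilityTheory

/-- The standard normal density φ(t) = (2π)^{-1/2} e^{-t²/2}. -/
noncomputable def stdNormalPDF (t : ℝ) : ℝ :=
  (Real.sqrt (2 * Real.pi))⁻¹ * Real.exp (-t ^ 2 / 2)

/-- The standard normal distribution function Φ(x) = ∫_{-∞}^x φ(t) dt. -/
noncomputable def stdNormalCDF (x : ℝ) : ℝ :=
  ∫ t in Set.Iic x, stdNormalPDF t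

/-- The density `stdNormalPDF` is Mathlib's Gaussian density with mean `0` and variance `1`. -/
lemma stdNormalPDF_eq : stdNormalPDF = gaussianPDFReal 0 1 := by
  ext t
  simp [stdNormalPDF, gaussianPDFReal_def]

lemma integrable_stdNormalPDF : Integrable stdNormalPDF := by
  rw [stdNormalPDF_eq]
  exact integrable_gaussianPDFReal 0 1

lemma stdNormalPDF_neg (t : ℝ) : stdNormalPDF (-t) = stdNormalPDF t := by
  simp [stdNormalPDF]

lemma stdNormalPDF_pos (t : ℝ) : 0 < stdNormalPDF t := by
  unfold stdNormalPDF
  positivity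

lemma stdNormalCDF_pos (x : ℝ) : 0 < stdNormalCDF x := by
  unfold stdNormalCDF
  rw [setIntegral_pos_iff_support_of_nonneg_ae
    (Filter.Eventually.of_forall fun t => (stdNormalPDF_pos t).le)
    integrable_stdNormalPDF.integrableOn]
  have h : Function.support stdNormalPDF = Set.univ :=
    Set.eq_univ_of_forall fun t => (stdNormalPDF_pos t).ne'
  simp [h]

lemma setIntegral_Ioi_stdNormalPDF (x : ℝ) :
    ∫ t in Set.Ioi (-x), stdNormalPDF t = stdNormalCDF x := by
  rw [stdNormalCDF, ← integral_comp_neg_Iic]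
  simp_rw [stdNormalPDF_neg]

lemma stdNormalCDF_add_neg (x : ℝ) : stdNormalCDF x + stdNormalCDF (-x) = 1 := by
  have h := integral_add_compl (s := Set.Iic x) measurableSet_Iic integrable_stdNormalPDF
  rw [Set.compl_Iic] at h
  have h2 := setIntegral_Ioi_stdNormalPDF (-x)
  rw [neg_neg] at h2
  rw [h2, stdNormalPDF_eq, integral_gaussianPDFReal_eq_one 0 one_ne_zero, ← stdNormalPDF_eq] at h
  exact h

lemma integrable_mul_stdNormalPDF : Integrable fun t => t * stdNormalPDF t := by
  have h := (integrable_mul_exp_neg_mul_sq (b := 1 / 2) (by norm_num)).const_mul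
    (Real.sqrt (2 * Real.pi))⁻¹
  refine h.congr (Filter.Eventually.of_forall fun t => ?_)
  simp only [stdNormalPDF]
  rw [show -(1 / 2 : ℝ) * t ^ 2 = -t ^ 2 / 2 by ring]
  ring

/-- The truncated first moment of the standard normal law: `φ` has derivative `-t φ t`
at `t`. -/
lemma setIntegral_Ioi_mul_stdNormalPDF (a : ℝ) :
    ∫ t in Set.Ioi a, t * stdNormalPDF t = stdNormalPDF a := by
  have hd : ∀ x : ℝ, HasDerivAt (fun t => -stdNormalPDF t) (x * stdNormalPDF x) x := by
    intro x
    have h1 : HasDerivAt (fun t : ℝ => -t ^ 2 / 2) (-x) x := by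
      have := ((hasDerivAt_pow 2 x).neg).div_const 2
      exact this.congr_deriv (by norm_num; ring)
    have h2 := (h1.exp.const_mul (Real.sqrt (2 * Real.pi))⁻¹).neg
    refine h2.congr_deriv ?_
    unfold stdNormalPDF
    ring
  have hlim : Filter.Tendsto (fun t => -stdNormalPDF t) Filter.atTop (nhds 0) := by
    have h1 : Filter.Tendsto (fun t : ℝ => t ^ 2 / 2) Filter.atTop Filter.atTop :=
      (Filter.tendsto_pow_atTop two_ne_zero).atTop_div_const (by norm_num)
    have h2 := ((Real.tendsto_exp_neg_atTop_nhds_zero.comp h1).const_mul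
      (Real.sqrt (2 * Real.pi))⁻¹).neg
    simp only [mul_zero, neg_zero] at h2
    refine h2.congr fun t => ?_
    simp [stdNormalPDF, neg_div]
  have := integral_Ioi_of_hasDerivAt_of_tendsto' (a := a) (fun x _ => hd x)
    integrable_mul_stdNormalPDF.integrableOn hlim
  rw [this]
  ring

/-- Standardization: an integral over the positive half-line against `N(μ, σ²)` becomes one
over `(-μ/σ, ∞)` against the standard normal density. -/
lemma setIntegral_Ioi_gaussianReal {μ σ : ℝ} {v : NNReal} (hσ : 0 < σ) (hv : (v : ℝ) = σ ^ 2) (g : ℝ → ℝ) (hg : Continuous g) :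
    ∫ x in Set.Ioi 0, g x ∂(gaussianReal μ v) =
      ∫ t in Set.Ioi (-(μ / σ)), stdNormalPDF t * g (σ * t + μ) := by
  have hmap : (gaussianReal 0 1).map (fun t => σ * t + μ) =
      gaussianReal μ v := by
    have h : (fun t => σ * t + μ) = (· + μ) ∘ (σ * ·) := rfl
    rw [h, ← Measure.map_map (by fun_prop) (by fun_prop), gaussianReal_map_const_mul,
      gaussianReal_map_add_const]
    congr 1
    · simp
    · exact NNReal.eq (by simp [hv])
  have hpre : (fun t => σ * t + μ) ⁻¹' Set.Ioi 0 = Set.Ioi (-(μ / σ)) := by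
    ext t
    simp only [Set.mem_preimage, Set.mem_Ioi]
    rw [← neg_div, div_lt_iff₀ hσ]
    constructor <;> intro h <;> linarith
  rw [← hmap, setIntegral_map measurableSet_Ioi hg.aestronglyMeasurable (by fun_prop), hpre,
    ← integral_indicator measurableSet_Ioi, integral_gaussianReal_eq_integral_smul one_ne_zero,
    ← integral_indicator measurableSet_Ioi, ← stdNormalPDF_eq]
  congr 1
  ext t
  by_cases ht : t ∈ Set.Ioi (-(μ / σ)) <;> simp [Set.indicator, ht]

lemma measureReal_Ioi_gaussianReal {μ σ : ℝ} {v : NNReal} (hσ : 0 < σ) (hv : (v : ℝ) = σ ^ 2) :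
    (gaussianReal μ v).real (Set.Ioi 0) = stdNormalCDF (μ / σ) := by
  have h := setIntegral_Ioi_gaussianReal (μ := μ) hσ hv (fun _ => 1) continuous_const
  simpa [setIntegral_Ioi_stdNormalPDF] using h

lemma setIntegral_Ioi_id_gaussianReal {μ σ : ℝ} {v : NNReal} (hσ : 0 < σ) (hv : (v : ℝ) = σ ^ 2) :
    ∫ x in Set.Ioi 0, x ∂(gaussianReal μ v) =
      μ * stdNormalCDF (μ / σ) + σ * stdNormalPDF (μ / σ) := by
  have h := setIntegral_Ioi_gaussianReal (μ := μ) hσ hv (fun x => x) continuous_id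
  rw [h]
  have h2 : ∀ t, stdNormalPDF t * (σ * t + μ) =
      σ * (t * stdNormalPDF t) + μ * stdNormalPDF t := fun t => by ring
  simp_rw [h2]
  rw [integral_add (integrable_mul_stdNormalPDF.integrableOn.const_mul σ)
    (integrable_stdNormalPDF.integrableOn.const_mul μ), integral_const_mul, integral_const_mul,
    setIntegral_Ioi_mul_stdNormalPDF, setIntegral_Ioi_stdNormalPDF, stdNormalPDF_neg]
  ring

lemma integrable_id_gaussianReal (μ : ℝ) (v : NNReal) : Integrable id (gaussianReal μ v) :=
  memLp_one_iff_integrable.1 (memLp_id_gaussianReal 1)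

lemma setIntegral_Iic_id_gaussianReal {μ σ : ℝ} {v : NNReal} (hσ : 0 < σ) (hv : (v : ℝ) = σ ^ 2) :
    ∫ x in Set.Iic 0, x ∂(gaussianReal μ v) =
      μ * stdNormalCDF (-(μ / σ)) - σ * stdNormalPDF (μ / σ) := by
  have h := integral_add_compl (s := Set.Ioi 0) measurableSet_Ioi
    (integrable_id_gaussianReal μ v)
  simp only [id, Set.compl_Ioi, setIntegral_Ioi_id_gaussianReal hσ hv,
    integral_id_gaussianReal] at h
  have h1 := stdNormalCDF_add_neg (μ / σ)
  linear_combination h - μ * h1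

lemma measureReal_Iic_gaussianReal {μ σ : ℝ} {v : NNReal} (hσ : 0 < σ) (hv : (v : ℝ) = σ ^ 2) :
    (gaussianReal μ v).real (Set.Iic 0) = stdNormalCDF (-(μ / σ)) := by
  have h := probReal_compl_eq_one_sub (μ := gaussianReal μ v)
    (s := Set.Ioi 0) measurableSet_Ioi
  rw [Set.compl_Ioi, measureReal_Ioi_gaussianReal hσ hv] at h
  linarith [stdNormalCDF_add_neg (μ / σ)]

/-- Fubini on a box: the `j`-th coordinate contributes its truncated mean, every other coordinate
its probability. -/
lemma setIntegral_pi_eval {n : ℕ} (ν : Measure ℝ) [IsProbabilityMeasure ν]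
    (s : Fin n → Set ℝ) (j : Fin n) :
    ∫ X in Set.univ.pi s, X j ∂(Measure.pi fun _ => ν) =
      (∫ x in s j, x ∂ν) * ∏ i ∈ Finset.univ.erase j, ν.real (s i) := by
  rw [Measure.restrict_pi_pi]
  have h := integral_fintype_prod_eq_prod (𝕜 := ℝ) (μ := fun i => ν.restrict (s i))
    (fun (i : Fin n) (x : ℝ) => if i = j then x else 1)
  have h1 : ∀ X : Fin n → ℝ, ∏ i, (if i = j then X i else 1) = X j := fun X => by simp
  simp_rw [h1] at h
  rw [h, ← Finset.mul_prod_erase _ _ (Finset.mem_univ j)]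
  congr 1
  · simp
  · refine Finset.prod_congr rfl fun i hi => ?_
    simp [Finset.ne_of_mem_erase hi]

lemma setOf_supporters_eq {n : ℕ} (T : Finset (Fin n)) :
    {X : Fin n → ℝ | Finset.univ.filter (fun i => 0 < X i) = T} =
      Set.univ.pi fun i => if i ∈ T then Set.Ioi 0 else Set.Iic 0 := by
  ext X
  simp only [Set.mem_ofPred_eq, Set.mem_univ_pi, Finset.ext_iff, Finset.mem_filter,
    Finset.mem_univ, true_and]
  refine forall_congr' fun i => ?_
  by_cases h : i ∈ T <;> simp [h]

/-- The contribution of the event that the set of supporters is exactly `T`. It depends only on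
`T.card` and on whether `j ∈ T`. -/
lemma setIntegral_supporters_eq {n : ℕ} {μ σ : ℝ} {v : NNReal} (hσ : 0 < σ) (hv : (v : ℝ) = σ ^ 2) (T : Finset (Fin n)) (j : Fin n) :
    ∫ X in {X : Fin n → ℝ | Finset.univ.filter (fun i => 0 < X i) = T}, X j
        ∂(Measure.pi fun _ : Fin n => gaussianReal μ v) =
      (if j ∈ T then μ + σ * stdNormalPDF (μ / σ) / stdNormalCDF (μ / σ)
        else μ - σ * stdNormalPDF (μ / σ) / stdNormalCDF (-(μ / σ))) *
      (stdNormalCDF (μ / σ) ^ T.card * stdNormalCDF (-(μ / σ)) ^ (n - T.card)) := by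
  have hp := (stdNormalCDF_pos (μ / σ)).ne'
  have hq := (stdNormalCDF_pos (-(μ / σ))).ne'
  rw [setOf_supporters_eq, setIntegral_pi_eval]
  have hprod : stdNormalCDF (μ / σ) ^ T.card * stdNormalCDF (-(μ / σ)) ^ (n - T.card) =
      ∏ i : Fin n, (gaussianReal μ v).real
        (if i ∈ T then Set.Ioi 0 else Set.Iic 0) := by
    simp_rw [apply_ite (gaussianReal μ v).real,
      measureReal_Ioi_gaussianReal hσ hv, measureReal_Iic_gaussianReal hσ hv]
    rw [Finset.prod_ite, Finset.prod_const, Finset.prod_const, Finset.filter_not]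
    simp [← Finset.compl_eq_univ_sdiff, Finset.card_compl]
  rw [hprod, ← Finset.mul_prod_erase _ _ (Finset.mem_univ j), ← mul_assoc]
  congr 1
  by_cases h : j ∈ T
  · simp only [h, if_true, measureReal_Ioi_gaussianReal hσ hv,
      setIntegral_Ioi_id_gaussianReal hσ hv]
    field_simp
  · simp only [h, if_false, measureReal_Iic_gaussianReal hσ hv,
      setIntegral_Iic_id_gaussianReal hσ hv]
    field_simp

/-- Among the `x`-element subsets of `Fin n`, the fraction `x / n` contain `j`. -/
lemma card_powersetCard_filter_mem {n : ℕ} (x : ℕ) (j : Fin n) :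
    (n : ℝ) * ((Finset.powersetCard x (Finset.univ : Finset (Fin n))).filter (j ∈ ·)).card =
      x * n.choose x := by
  have hnot : (Finset.powersetCard x (Finset.univ : Finset (Fin n))).filter (j ∉ ·) =
      Finset.powersetCard x (Finset.univ.erase j) := by
    ext T
    simp only [Finset.mem_filter, Finset.mem_powersetCard, Finset.subset_univ, true_and,
      Finset.subset_erase]
    tauto
  have hsum := Finset.card_filter_add_card_filter_not
    (s := Finset.powersetCard x (Finset.univ : Finset (Fin n))) (j ∈ ·)
  rw [hnot] at hsum
  simp only [Finset.card_powersetCard, Finset.card_erase_of_mem (Finset.mem_univ j),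
    Finset.card_univ, Fintype.card_fin] at hsum
  obtain ⟨m, rfl⟩ : ∃ m, n = m + 1 := ⟨n - 1, by have := j.pos; omega⟩
  simp only [Nat.add_sub_cancel] at hsum
  rcases le_or_gt x (m + 1) with hx | hx
  · have h := Nat.choose_mul_succ_eq m x
    have hsumR : ((((Finset.powersetCard x (Finset.univ : Finset (Fin (m + 1)))).filter
        (j ∈ ·)).card : ℕ) : ℝ) + m.choose x = (m + 1).choose x := by exact_mod_cast hsum
    have hR : (m.choose x : ℝ) * (m + 1) = (m + 1).choose x * ((m + 1 : ℝ) - x) := by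
      have := congrArg (Nat.cast (R := ℝ)) h
      push_cast [Nat.cast_sub hx] at this
      exact this
    push_cast
    linear_combination ((m : ℝ) + 1) * hsumR - hR
  · rw [Nat.choose_eq_zero_of_lt hx] at hsum ⊢
    have : ((Finset.powersetCard x (Finset.univ : Finset (Fin (m + 1)))).filter
        (j ∈ ·)).card = 0 := by omega
    simp [this]

/-- Proposition 1, part 1: the expected one-step capital increment of agent `j`
in a society of `n` egoists with acceptance threshold `α`. -/
theorem expected_increment_egoists
    (n : ℕ) (hn : 1 ≤ n) (μ σ : ℝ) (hσ : 0 < σ) (α : ℝ) (hα : α ∈ Set.Ico (0 : ℝ) 1)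
    (ρ p q f : ℝ) (hρ : ρ = μ / σ) (hp : p = stdNormalCDF ρ) (hq : q = stdNormalCDF (-ρ))
    (hf : f = stdNormalPDF ρ) (j : Fin n) :
    ∫ X in {X : Fin n → ℝ |
        ⌊α * n⌋₊ + 1 ≤ (Finset.univ.filter (fun i => 0 < X i)).card}, X j
        ∂(Measure.pi fun _ : Fin n => gaussianReal μ ⟨σ ^ 2, sq_nonneg σ⟩) =
      σ * ∑ x ∈ Finset.Icc (⌊α * n⌋₊ + 1) n,
        (ρ + f / q * (x / (p * n) - 1)) * (n.choose x) * p ^ x * q ^ (n - x) := by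
  subst hρ hp hq hf
  -- The anonymous constructor of the variance blocks instance search for the Gaussian measure,
  -- so the variance is abstracted to a variable.
  suffices H : ∀ v : NNReal, (v : ℝ) = σ ^ 2 → ∀ k : ℕ,
      ∫ X in {X : Fin n → ℝ | k ≤ (Finset.univ.filter (fun i => 0 < X i)).card}, X j
        ∂(Measure.pi fun _ : Fin n => gaussianReal μ v) =
      σ * ∑ x ∈ Finset.Icc k n, (μ / σ + stdNormalPDF (μ / σ) / stdNormalCDF (-(μ / σ)) *
        (x / (stdNormalCDF (μ / σ) * n) - 1)) * (n.choose x) * stdNormalCDF (μ / σ) ^ x *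
        stdNormalCDF (-(μ / σ)) ^ (n - x) from H ⟨σ ^ 2, sq_nonneg σ⟩ rfl _
  intro v hv k
  have hp0 := (stdNormalCDF_pos (μ / σ)).ne'
  have hq0 := (stdNormalCDF_pos (-(μ / σ))).ne'
  have hpq := stdNormalCDF_add_neg (μ / σ)
  have hn0 : (n : ℝ) ≠ 0 := by positivity
  have hS : {X : Fin n → ℝ | k ≤ (Finset.univ.filter (fun i => 0 < X i)).card} =
      ⋃ T ∈ (Finset.univ.filter (fun T : Finset (Fin n) => k ≤ T.card)),
        {X : Fin n → ℝ | Finset.univ.filter (fun i => 0 < X i) = T} := by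
    ext X
    simp
  rw [hS, integral_biUnion_finset]
  rotate_left
  · intro T _
    rw [setOf_supporters_eq]
    refine MeasurableSet.univ_pi fun i => ?_
    split_ifs
    exacts [measurableSet_Ioi, measurableSet_Iic]
  · intro T _ T' _ hne
    exact Set.disjoint_left.2 fun X hX hX' => hne (hX.symm.trans hX')
  · intro T _
    exact (integrable_eval (μ := fun _ : Fin n => gaussianReal μ v) (i := j)
      (integrable_id_gaussianReal _ _)).integrableOn
  simp_rw [setIntegral_supporters_eq hσ hv]
  -- Group the sets `T` by cardinality.
  rw [← Finset.sum_fiberwise_of_maps_to (g := Finset.card) (t := Finset.Icc k n)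
    (fun T hT => Finset.mem_Icc.2 ⟨(Finset.mem_filter.1 hT).2, by
      simpa using Finset.card_le_univ T⟩), Finset.mul_sum]
  refine Finset.sum_congr rfl fun x hx => ?_
  have hfib : (Finset.univ.filter (fun T : Finset (Fin n) => k ≤ T.card)).filter
      (fun T => T.card = x) = Finset.powersetCard x Finset.univ := by
    ext T
    simp only [Finset.mem_filter, Finset.mem_univ, true_and, Finset.mem_powersetCard,
      Finset.subset_univ]
    have := (Finset.mem_Icc.1 hx).1
    exact ⟨fun h => h.2, fun h => ⟨h ▸ this, h⟩⟩
  have hcard : ∀ T ∈ Finset.powersetCard x (Finset.univ : Finset (Fin n)), T.card = x :=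
    fun T hT => (Finset.mem_powersetCard.1 hT).2
  rw [hfib, Finset.sum_congr rfl fun T hT => by rw [hcard T hT], ← Finset.sum_mul,
    Finset.sum_ite, Finset.sum_const, Finset.sum_const, nsmul_eq_mul, nsmul_eq_mul]
  have hmem := card_powersetCard_filter_mem x j
  have htot := Finset.card_filter_add_card_filter_not
    (s := Finset.powersetCard x (Finset.univ : Finset (Fin n))) (j ∈ ·)
  simp only [Finset.card_powersetCard, Finset.card_univ, Fintype.card_fin] at htot
  have htotR := congrArg (Nat.cast (R := ℝ)) htot
  push_cast at htotR
  generalize (((Finset.powersetCard x (Finset.univ : Finset (Fin n))).filter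
    (j ∈ ·)).card : ℝ) = A at *
  generalize (((Finset.powersetCard x (Finset.univ : Finset (Fin n))).filter
    (j ∉ ·)).card : ℝ) = B at *
  generalize stdNormalCDF (μ / σ) = p at *
  generalize stdNormalCDF (-(μ / σ)) = q at *
  generalize stdNormalPDF (μ / σ) = f at *
  obtain rfl : q = 1 - p := by linarith
  obtain rfl : B = n.choose x - A := by linarith
  obtain rfl : A = x * n.choose x / n := by rw [eq_div_iff hn0]; linarith
  have hσ0 := hσ.ne'
  suffices h : x * n.choose x / n * (μ + σ * f / p) +
      (n.choose x - x * n.choose x / n) * (μ - σ * f / (1 - p)) =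
      σ * ((μ / σ + f / (1 - p) * (x / (p * n) - 1)) * n.choose x) by
    rw [h]
    ring
  field_simp
  ring
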